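/- Let u ∈ ℝ⁴ be a future timelike vector, p₀ ∈ ℝ⁴, and ℓ = {p₀ + s u : s ∈ ℝ}. Let Ĝ_M be the group of affine bijections f of ℝ⁴ of the form f(x) = μ B x + b with μ > 0, B a Lorentz transformation (not necessarily proper or orthochronous, so in particular time inversion is allowed), and b ∈ ℝ⁴, such that f(ℓ) = ℓ. If ∼ is an equivalence relation on ℝ⁴ that is Ĝ_M-invariant, is not the total relation, and the equivalence class of some point of ℓ is not contained in ℓ, then ∼ equals the standard simultaneity relation R_u: x ∼ y ⟺ g_c(x − y, u) = 0. -/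

import Mathlib

noncomputable section

/-- Spacetime `ℝ⁴`, identified with `ℝ³ × ℝ`. -/
abbrev V4 : Type := (Fin 3 → ℝ) × ℝ

/-- The Minkowski form `g_c(x, y) = x̄ ⬝ ȳ - c² x⁴ y⁴`. -/
def mink (c : ℝ) (x y : V4) : ℝ := (∑ i, x.1 i * y.1 i) - c ^ 2 * x.2 * y.2

/-- A vector is future timelike if `g_c(u, u) < 0` and `u⁴ > 0`. -/
def FutureTimelike (c : ℝ) (u : V4) : Prop := mink c u u < 0 ∧ 0 < u.2

/-- A linear map is a Lorentz transformation if it preserves the Minkowski form. -/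
def IsLorentz (c : ℝ) (B : V4 →ₗ[ℝ] V4) : Prop :=
  ∀ x y : V4, mink c (B x) (B y) = mink c x y

/-- The standard simultaneity relation determined by a future timelike vector `u`:
`x R_u y ↔ g_c(x - y, u) = 0`. -/
def Rstd (c : ℝ) (u : V4) (x y : V4) : Prop := mink c (x - y) u = 0

/-- The inertial worldline through `p₀` with direction `u`. -/
def line (p₀ u : V4) : Set V4 := {x : V4 | ∃ s : ℝ, x = p₀ + s • u}

/-!
Move `p₀` to the origin and write a point as `a u + w` with `w` orthogonal to `u`. If the class of
`0` contains `a u + w` with `w ≠ 0`, then by time reversal it contains `-a u + w`; translating along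
the axis turns this into `0 ∼ 2a u`, and halving and translating back gives `0 ∼ w`. Dilations and
reflections fixing `u` carry `w` to every nonzero vector orthogonal to `u`, so each point is
equivalent to its projection to the axis. Two distinct equivalent points of the axis would, by
dilations and translations, make the whole axis lie in a single class, and then the relation would
be total.
-/

open LinearMap (BilinForm)

section Reflection

variable {K V : Type*} [Field K] [AddCommGroup V] [Module K V] {B : BilinForm K V}

theorem exists_isOrthogonal_reflection (hB : B.IsSymm) {v : V} (hv : B v v ≠ 0) :
    ∃ T : V →ₗ[K] V, B.IsOrthogonal T ∧ T v = -v ∧ ∀ x, B v x = 0 → T x = x := by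
  have hrefl : B.IsReflective v :=
    ⟨.of_ne_zero hv, fun _ ↦ hv.isUnit.dvd⟩
  have hself : hrefl.coroot B v = 2 := hrefl.coroot_apply_self B
  refine ⟨Module.reflection hself,
    hrefl.isOrthogonal_reflection B (LinearMap.BilinForm.isSymm_iff.1 hB),
    Module.reflection_apply_self hself, fun x hx ↦ ?_⟩
  have hcoroot : hrefl.coroot B x = 0 := (mul_eq_zero_iff_left hv).1 <| by
    rw [hrefl.apply_self_mul_coroot_apply, hx, mul_zero]
  simp [Module.reflection_apply, hcoroot]

theorem exists_isOrthogonal_map_eq_of_apply_self_eq [NeZero (2 : K)] (hB : B.IsSymm) {v w : V}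
    (hvw : B v v = B w w) (hsub : B (v - w) (v - w) ≠ 0) :
    ∃ T : V →ₗ[K] V, B.IsOrthogonal T ∧ T v = w ∧ ∀ x, B (v - w) x = 0 → T x = x := by
  obtain ⟨T, hT, hneg, hfix⟩ := exists_isOrthogonal_reflection hB hsub
  refine ⟨T, hT, ?_, hfix⟩
  have hadd : T (v + w) = v + w := hfix _ <| by
    simp only [map_sub, map_add, LinearMap.sub_apply, hvw, hB.eq w v]
    ring
  have htwo : (2 : K) • T v = (2 : K) • w := by
    calc (2 : K) • T v = T (v + w) + T (v - w) := by rw [map_add, map_sub]; module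
      _ = (2 : K) • w := by rw [hadd, hneg]; module
  exact smul_right_injective V (two_ne_zero (α := K)) htwo

end Reflection

section AxisProj

variable {K V : Type*} [Field K] [AddCommGroup V] [Module K V] {B : BilinForm K V} {u : V}

/-- The `B`-orthogonal projection onto the axis spanned by `u`. It is the zero map when
`B u u = 0`. -/
def axisProj (B : BilinForm K V) (u : V) : V →ₗ[K] V :=
  ((B u u)⁻¹ • B u).smulRight u

theorem axisProj_apply (x : V) : axisProj B u x = ((B u u)⁻¹ * B u x) • u := rfl

theorem apply_sub_axisProj (hu : B u u ≠ 0) (x : V) : B u (x - axisProj B u x) = 0 := by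
  simp only [axisProj_apply, map_sub, map_smul, smul_eq_mul]
  field_simp
  ring

theorem axisProj_eq_axisProj_iff (hu : B u u ≠ 0) {x y : V} :
    axisProj B u x = axisProj B u y ↔ B u (x - y) = 0 := by
  have hu₀ : u ≠ 0 := by
    rintro rfl
    simp at hu
  rw [← sub_eq_zero, ← map_sub, axisProj_apply, smul_eq_zero_iff_left hu₀,
    mul_eq_zero_iff_left (inv_ne_zero hu)]

end AxisProj

theorem map_mk'_span_singleton_eq {K V : Type*} [CommRing K] [AddCommGroup V] [Module K V]
    {f : V →ᵃ[K] V} {p u : V} {k : K} (hk : IsUnit k) (hlin : f.linear u = k • u)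
    (hp : f p ∈ AffineSubspace.mk' p (K ∙ u)) :
    (AffineSubspace.mk' p (K ∙ u)).map f = AffineSubspace.mk' p (K ∙ u) := by
  have hspan : (K ∙ u).map f.linear = K ∙ u := by
    rw [Submodule.map_span, Set.image_singleton, hlin, Submodule.span_singleton_smul_eq hk]
  rw [AffineSubspace.map_mk', hspan]
  simpa only [AffineSubspace.direction_mk'] using AffineSubspace.mk'_eq hp

section Axis

variable {V : Type*} [AddCommGroup V] [Module ℝ V] {B : BilinForm ℝ V} {u : V} {r : Setoid V}

theorem exists_isOrthogonal_fixing_map_eq (hB : B.IsSymm)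
    (hpos : ∀ w, B u w = 0 → w ≠ 0 → 0 < B w w) {v w : V} (hv : B u v = 0) (hw : B u w = 0)
    (hvw : B v v = B w w) : ∃ T : V →ₗ[ℝ] V, B.IsOrthogonal T ∧ T u = u ∧ T v = w := by
  obtain rfl | hne := eq_or_ne v w
  · exact ⟨LinearMap.id, fun _ _ ↦ rfl, rfl, rfl⟩
  have hsub : B u (v - w) = 0 := by rw [map_sub, hv, hw, sub_zero]
  obtain ⟨T, hT, hmap, hfix⟩ :=
    exists_isOrthogonal_map_eq_of_apply_self_eq hB hvw (hpos _ hsub (sub_ne_zero.2 hne)).ne'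
  exact ⟨T, hT, hfix u ((hB.eq _ _).trans hsub), hmap⟩

/-- Invariance of an equivalence relation under generators of the group `Ĝ_M` of the axis `ℝ u`
through the origin: translations along the axis, positive dilations, and isometries of `B` that
map `u` to `± u`. -/
structure IsAxisInvariant (B : BilinForm ℝ V) (u : V) (r : Setoid V) : Prop where
  translate : ∀ (t : ℝ) {x y : V}, r x y → r (x + t • u) (y + t • u)
  dilate : ∀ {μ : ℝ}, 0 < μ → ∀ {x y : V}, r x y → r (μ • x) (μ • y)
  map : ∀ {T : V →ₗ[ℝ] V}, B.IsOrthogonal T → T u = u ∨ T u = -u →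
    ∀ {x y : V}, r x y → r (T x) (T y)

namespace IsAxisInvariant

theorem rel_zero_smul (h : IsAxisInvariant B u r) {e : ℝ} (he : e ≠ 0) (hr : r 0 (e • u)) (d : ℝ) :
    r 0 (d • u) := by
  have hmul : ∀ {k : ℝ}, 0 < k → r 0 ((k * e) • u) := fun hk ↦ by
    simpa only [smul_zero, mul_smul] using h.dilate hk hr
  rcases lt_trichotomy (d / e) 0 with hneg | hzero | hpos
  · have hopp : r 0 (-d • u) := by
      simpa only [neg_mul, div_mul_cancel₀ d he] using hmul (neg_pos.2 hneg)
    simpa using r.symm (h.translate d hopp)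
  · rw [(div_eq_zero_iff.1 hzero).resolve_right he, zero_smul]
  · simpa only [div_mul_cancel₀ d he] using hmul hpos

theorem rel_zero_of_rel_zero_smul_add (h : IsAxisInvariant B u r) (hB : B.IsSymm)
    (hu : B u u ≠ 0) {a : ℝ} {w : V} (hw : B u w = 0) (hr : r 0 (a • u + w)) : r 0 w := by
  obtain ⟨T, hT, hTu, hfix⟩ := exists_isOrthogonal_reflection hB hu
  have hreversed : r 0 (-(a • u) + w) := by
    simpa only [map_zero, map_add, map_smul, hTu, smul_neg, hfix w hw] using
      h.map hT (.inr hTu) hr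
  have hshifted : r ((2 * a) • u) (a • u + w) := by
    convert h.translate (2 * a) hreversed using 1 <;> module
  have hdouble : r 0 ((2 * a) • u) := r.trans hr (r.symm hshifted)
  have haxis : r 0 (a • u) := by
    convert h.dilate (one_half_pos (α := ℝ)) hdouble using 1 <;> module
  convert h.translate (-a) (r.trans (r.symm haxis) hr) using 1 <;> module

theorem rel_zero_of_orthogonal (h : IsAxisInvariant B u r) (hB : B.IsSymm)
    (hpos : ∀ w, B u w = 0 → w ≠ 0 → 0 < B w w) {v w : V} (hv : B u v = 0) (hv₀ : v ≠ 0)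
    (hr : r 0 v) (hw : B u w = 0) : r 0 w := by
  obtain rfl | hw₀ := eq_or_ne w 0
  · exact r.refl 0
  have hvv := hpos v hv hv₀
  have hratio : 0 < B w w / B v v := div_pos (hpos w hw hw₀) hvv
  set μ := √(B w w / B v v)
  have hnorm : B (μ • v) (μ • v) = B w w := by
    simp only [map_smul, LinearMap.smul_apply, smul_eq_mul]
    rw [← mul_assoc, Real.mul_self_sqrt hratio.le, div_mul_cancel₀ _ hvv.ne']
  obtain ⟨T, hT, hTu, hTv⟩ :=
    exists_isOrthogonal_fixing_map_eq hB hpos (by rw [map_smul, hv, smul_zero]) hw hnorm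
  have hμ_pos : 0 < μ := Real.sqrt_pos.2 hratio
  simpa only [smul_zero, map_zero, hTv] using h.map hT (.inl hTu) (h.dilate hμ_pos hr)

theorem rel_axisProj (h : IsAxisInvariant B u r) (hB : B.IsSymm) (hu : B u u ≠ 0)
    (hpos : ∀ w, B u w = 0 → w ≠ 0 → 0 < B w w)
    (hclass : ∃ p ∈ ℝ ∙ u, ∃ q, r p q ∧ q ∉ ℝ ∙ u) (x : V) : r (axisProj B u x) x := by
  obtain ⟨p, hp, q, hpq, hq⟩ := hclass
  obtain ⟨s, rfl⟩ := Submodule.mem_span_singleton.1 hp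
  have hperp := apply_sub_axisProj hu q
  have hne : q - axisProj B u q ≠ 0 := fun h₀ ↦
    hq <| sub_eq_zero.1 h₀ ▸ Submodule.smul_mem _ _ (Submodule.mem_span_singleton_self u)
  have hcentred : r 0 (((B u u)⁻¹ * B u q - s) • u + (q - axisProj B u q)) := by
    convert h.translate (-s) hpq using 1
    · module
    · rw [axisProj_apply]; module
  have hzero := h.rel_zero_of_rel_zero_smul_add hB hu hperp hcentred
  convert h.translate ((B u u)⁻¹ * B u x)
    (h.rel_zero_of_orthogonal hB hpos hperp hne hzero (apply_sub_axisProj hu x)) using 1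
  · rw [axisProj_apply, zero_add]
  · rw [axisProj_apply, sub_add_cancel]

theorem eq_of_rel_smul_smul (h : IsAxisInvariant B u r) (hproj : ∀ x, r (axisProj B u x) x)
    (hr : r ≠ ⊤) {s t : ℝ} (hst : r (s • u) (t • u)) : s = t := by
  by_contra hne
  have hdiff : r 0 ((t - s) • u) := by
    convert h.translate (-s) hst using 1 <;> module
  have hall (x : V) : r 0 x :=
    r.trans (h.rel_zero_smul (sub_ne_zero.2 (Ne.symm hne)) hdiff _) (hproj x)
  exact hr <| Setoid.eq_top_iff.2 fun x y ↦ r.trans (r.symm (hall x)) (hall y)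

theorem rel_iff (h : IsAxisInvariant B u r) (hB : B.IsSymm) (hu : B u u ≠ 0)
    (hpos : ∀ w, B u w = 0 → w ≠ 0 → 0 < B w w) (hr : r ≠ ⊤)
    (hclass : ∃ p ∈ ℝ ∙ u, ∃ q, r p q ∧ q ∉ ℝ ∙ u) (x y : V) : r x y ↔ B (x - y) u = 0 := by
  have hproj := h.rel_axisProj hB hu hpos hclass
  rw [hB.eq, ← axisProj_eq_axisProj_iff hu]
  refine ⟨fun hxy ↦ ?_, fun hxy ↦ r.trans (r.symm (hproj x)) (hxy ▸ hproj y)⟩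
  have hst := r.trans (hproj x) (r.trans hxy (r.symm (hproj y)))
  exact congrArg (· • u) (h.eq_of_rel_smul_smul hproj hr hst)

end IsAxisInvariant

theorem isAxisInvariant_comap_add {p₀ : V} (hinv : ∀ μ : ℝ, 0 < μ →
      ∀ T : V →ₗ[ℝ] V, B.IsOrthogonal T → ∀ b : V,
      (fun x ↦ μ • T x + b) '' AffineSubspace.mk' p₀ (ℝ ∙ u) = AffineSubspace.mk' p₀ (ℝ ∙ u) →
      ∀ p q, r p q → r (μ • T p + b) (μ • T q + b)) :
    IsAxisInvariant B u (r.comap (p₀ + ·)) := by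
  have hsim {μ : ℝ} (hμ : 0 < μ) {T : V →ₗ[ℝ] V} (hT : B.IsOrthogonal T) {ε : ℝ} (hε : ε ≠ 0)
      (hTu : T u = ε • u) (t : ℝ) {x y : V} (hxy : r (p₀ + x) (p₀ + y)) :
      r (p₀ + (μ • T x + t • u)) (p₀ + (μ • T y + t • u)) := by
    let f : V →ᵃ[ℝ] V := (μ • T).toAffineMap + AffineMap.const ℝ V (p₀ - μ • T p₀ + t • u)
    have hlin : f.linear u = (μ * ε) • u := by simp [f, hTu, mul_smul]
    have hp₀ : f p₀ = p₀ + t • u := by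
      change μ • T p₀ + (p₀ - μ • T p₀ + t • u) = p₀ + t • u
      abel
    have hmem : f p₀ ∈ AffineSubspace.mk' p₀ (ℝ ∙ u) := by
      rw [hp₀, AffineSubspace.mem_mk', vsub_eq_sub, add_sub_cancel_left]
      exact Submodule.smul_mem _ _ (Submodule.mem_span_singleton_self u)
    have hline := map_mk'_span_singleton_eq (mul_ne_zero hμ.ne' hε).isUnit hlin hmem
    convert hinv μ hμ T hT (p₀ - μ • T p₀ + t • u)
      (congrArg ((↑) : AffineSubspace ℝ V → Set V) hline) _ _ hxy using 1 <;>
    rw [map_add] <;> module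
  refine ⟨fun t x y hxy ↦ ?_, fun hμ x y hxy ↦ ?_, fun {T} hT hTu x y hxy ↦ ?_⟩ <;>
    rw [Setoid.comap_rel] at hxy ⊢
  · simpa using hsim one_pos (T := .id) (fun _ _ ↦ rfl) one_ne_zero (one_smul ℝ u).symm t hxy
  · simpa using hsim hμ (T := .id) (fun _ _ ↦ rfl) one_ne_zero (one_smul ℝ u).symm 0 hxy
  · obtain ⟨ε, hε, hTε⟩ : ∃ ε : ℝ, ε ≠ 0 ∧ T u = ε • u := by
      rcases hTu with hTu | hTu
      · exact ⟨1, one_ne_zero, by rw [hTu, one_smul]⟩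
      · exact ⟨-1, by norm_num, by rw [hTu, neg_one_smul]⟩
    simpa using hsim one_pos hT hε hTε 0 hxy

end Axis

theorem malament_theorem_general {V : Type*} [AddCommGroup V] [Module ℝ V] {B : BilinForm ℝ V}
    (hB : B.IsSymm) {u : V} (hu : B u u ≠ 0) (hpos : ∀ w, B u w = 0 → w ≠ 0 → 0 < B w w)
    (p₀ : V) (r : V → V → Prop) (hr : Equivalence r)
    (hinv : ∀ μ : ℝ, 0 < μ → ∀ T : V →ₗ[ℝ] V, B.IsOrthogonal T → ∀ b : V,
      (fun x ↦ μ • T x + b) '' AffineSubspace.mk' p₀ (ℝ ∙ u) = AffineSubspace.mk' p₀ (ℝ ∙ u) →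
      ∀ p q, r p q → r (μ • T p + b) (μ • T q + b))
    (hnot_total : ¬ ∀ p q, r p q)
    (hclass : ∃ p ∈ AffineSubspace.mk' p₀ (ℝ ∙ u), ∃ q, r p q ∧
      q ∉ AffineSubspace.mk' p₀ (ℝ ∙ u))
    (x y : V) : r x y ↔ B (x - y) u = 0 := by
  let centred : Setoid V := Setoid.comap (p₀ + ·) ⟨r, hr⟩
  have hcentred (p q : V) : centred (p - p₀) (q - p₀) ↔ r p q := by
    change r (p₀ + (p - p₀)) (p₀ + (q - p₀)) ↔ r p q
    rw [add_sub_cancel, add_sub_cancel]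
  have hne_top : centred ≠ ⊤ := fun htop ↦
    hnot_total fun p q ↦ (hcentred p q).1 (Setoid.eq_top_iff.1 htop _ _)
  have hinvariant : IsAxisInvariant B u centred := isAxisInvariant_comap_add hinv
  obtain ⟨p, hp, q, hpq, hq⟩ := hclass
  rw [← hcentred, hinvariant.rel_iff hB hu hpos hne_top
    ⟨p - p₀, hp, q - p₀, (hcentred p q).2 hpq, hq⟩, sub_sub_sub_cancel_right]

section Minkowski

/-- The Minkowski form `mink c` as a bilinear form. -/
def minkForm (c : ℝ) : BilinForm ℝ V4 :=
  LinearMap.mk₂ ℝ (mink c)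
    (fun x y z ↦ by
      simp only [mink, Prod.fst_add, Prod.snd_add, Pi.add_apply, add_mul, Finset.sum_add_distrib]
      ring)
    (fun a x y ↦ by simp [mink, Finset.mul_sum, mul_sub, mul_assoc, mul_left_comm])
    (fun x y z ↦ by
      simp only [mink, Prod.fst_add, Prod.snd_add, Pi.add_apply, mul_add, Finset.sum_add_distrib]
      ring)
    (fun a x y ↦ by simp [mink, Finset.mul_sum, mul_sub, mul_left_comm])

theorem minkForm_isSymm (c : ℝ) : (minkForm c).IsSymm :=
  ⟨fun x y ↦ by simp [minkForm, mink, mul_comm, mul_left_comm]⟩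

theorem mink_self_pos_of_orthogonal_timelike {c : ℝ} {u w : V4} (hu : mink c u u < 0)
    (huw : mink c u w = 0) (hw : w ≠ 0) : 0 < mink c w w := by
  by_contra! hww
  simp only [mink, mul_assoc, ← sq] at hu huw hww
  have hw_nonneg : 0 ≤ ∑ i, w.1 i ^ 2 := Finset.sum_nonneg fun _ _ ↦ sq_nonneg _
  have hu_nonneg : 0 ≤ ∑ i, u.1 i ^ 2 := Finset.sum_nonneg fun _ _ ↦ sq_nonneg _
  have hc : c ≠ 0 := by
    rintro rfl
    linarith
  have hle : (c ^ 2 * u.2 ^ 2) * (c ^ 2 * w.2 ^ 2) ≤ (∑ i, u.1 i ^ 2) * (c ^ 2 * w.2 ^ 2) :=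
    calc (c ^ 2 * u.2 ^ 2) * (c ^ 2 * w.2 ^ 2) = (∑ i, u.1 i * w.1 i) ^ 2 := by
          rw [sub_eq_zero.1 huw]; ring
      _ ≤ (∑ i, u.1 i ^ 2) * ∑ i, w.1 i ^ 2 := Finset.sum_mul_sq_le_sq_mul_sq _ _ _
      _ ≤ (∑ i, u.1 i ^ 2) * (c ^ 2 * w.2 ^ 2) := by gcongr; linarith
  have htime : c ^ 2 * w.2 ^ 2 = 0 :=
    (not_lt.1 fun h ↦ (le_of_mul_le_mul_right hle h).not_gt (by linarith)).antisymm
      (by positivity)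
  have hspace : ∑ i, w.1 i ^ 2 = 0 := by linarith
  refine hw (Prod.ext (funext fun i ↦ ?_) (by simpa [hc] using htime))
  simpa using
    (Finset.sum_eq_zero_iff_of_nonneg fun _ _ ↦ sq_nonneg _).1 hspace i (Finset.mem_univ i)

theorem line_eq_coe_mk' (p₀ u : V4) : line p₀ u = AffineSubspace.mk' p₀ (ℝ ∙ u) := by
  ext x
  simp only [line, Set.mem_ofPred_eq, SetLike.mem_coe, AffineSubspace.mem_mk', vsub_eq_sub,
    Submodule.mem_span_singleton, eq_sub_iff_add_eq', eq_comm]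

end Minkowski

/-- Malament's theorem (with the Sarkar–Stachel extension): let `Ĝ_M` be the group
of affine bijections `x ↦ μ B x + b` (`μ > 0`, `B` any Lorentz transformation —
time inversion allowed) preserving the line `ℓ = p₀ + ℝu`.  Any `Ĝ_M`-invariant
equivalence relation which is not total and for which the class of some point of `ℓ`
is not contained in `ℓ` is the standard simultaneity `R_u`. -/
theorem malament_theorem (c : ℝ) (hc : 0 < c) (u : V4) (hu : FutureTimelike c u)
    (p₀ : V4) (r : V4 → V4 → Prop) (hr : Equivalence r)
    (hinv : ∀ μ : ℝ, 0 < μ → ∀ B : V4 →ₗ[ℝ] V4, IsLorentz c B → ∀ b : V4,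
      (fun x : V4 => μ • B x + b) '' line p₀ u = line p₀ u →
      ∀ p q : V4, r p q → r (μ • B p + b) (μ • B q + b))
    (hnot_total : ¬ ∀ p q : V4, r p q)
    (hclass : ∃ p ∈ line p₀ u, ∃ q : V4, r p q ∧ q ∉ line p₀ u) :
    ∀ x y : V4, r x y ↔ Rstd c u x y := by
  simp only [line_eq_coe_mk'] at hinv hclass
  exact malament_theorem_general (minkForm_isSymm c) hu.1.ne
    (fun _ ↦ mink_self_pos_of_orthogonal_timelike hu.1) p₀ r hr hinv hnot_total hclass
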